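/- (Growth of the cubic interaction coefficients) For all i, j, m ∈ ℕ, |∫₀^{π/2} e_i(x)·e_j(x)·e_m(x)·tan²(x) dx| ≤ (2/√π)·ω_i and |∫₀^{π/2} e_i(x)·(e_j'(x)/ω_j)·(e_m'(x)/ω_m)·tan²(x) dx| ≤ (2/√π)·ω_i; i.e. the Fourier constants C_{ij}^{(m)} and C̄_{ij}^{(m)} are O(ω_i). -/

import Mathlib

open Real MeasureTheory

/-- The AdS linearized eigenvalue `ω_j = 2j + 3`. -/
noncomputable def ω (j : ℕ) : ℝ := 2 * j + 3

/-- The AdS linearized eigenfunction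
`e_j(x) = (2/√π)·(ω_j² − 1)^(−1/2)·(ω_j·sin(ω_j x)/tan x − cos(ω_j x))`. -/
noncomputable def e (j : ℕ) (x : ℝ) : ℝ :=
  (2 / Real.sqrt Real.pi) * (Real.sqrt (ω j ^ 2 - 1))⁻¹ *
    (ω j * Real.sin (ω j * x) / Real.tan x - Real.cos (ω j * x))

/-- The derivative of the AdS linearized eigenfunction,
`e_j'(x) = (2/√π)·ω_j·(ω_j² − 1)^(−1/2)·(ω_j·cos(ω_j x)/tan x − sin(ω_j x)/tan² x)`. -/
noncomputable def e' (j : ℕ) (x : ℝ) : ℝ :=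
  (2 / Real.sqrt Real.pi) * ω j * (Real.sqrt (ω j ^ 2 - 1))⁻¹ *
    (ω j * Real.cos (ω j * x) / Real.tan x - Real.sin (ω j * x) / Real.tan x ^ 2)

/-!
Multiplication by `tan x` turns `e_j` and `e_j' / ω_j` into functions of norm one in `L²(0, π/2)`,
while `e_i` is bounded by `(2/√π) ω_i`; both estimates are then the Cauchy–Schwarz inequality.

Up to the normalizing constant, `e_j' / ω_j` becomes `ω cos (ω x) - sin (ω x) cot x`, whose square
is `ω² cos² (ω x) - sin² (ω x)` minus the derivative of `sin² (ω x) cot x`. As `ω` is an integer,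
`sin (ω x) / sin x` is a Chebyshev polynomial in `cos x`, so `sin² (ω x) cot x` is continuous and
vanishes at both ends. As `ω` is odd, the reflection `x ↦ π/2 - x` exchanges, up to sign,
`tan x · e_j` and `tan x · e_j' / ω_j`.
-/

section Integral

variable {α : Type*} {mα : MeasurableSpace α} {μ : Measure α}

theorem memLp_two_of_integral_sq_ne_zero {f : α → ℝ} (hf : AEStronglyMeasurable f μ)
    (h : ∫ x, f x ^ 2 ∂μ ≠ 0) : MemLp f 2 μ :=
  (memLp_two_iff_integrable_sq hf).2 (.of_integral_ne_zero h)

theorem integral_abs_mul_abs_le_sqrt_mul_sqrt {f g : α → ℝ} (hf : MemLp f 2 μ) (hg : MemLp g 2 μ) :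
    ∫ x, |f x| * |g x| ∂μ ≤ √(∫ x, f x ^ 2 ∂μ) * √(∫ x, g x ^ 2 ∂μ) := by
  have h := integral_mul_norm_le_Lp_mul_Lq (μ := μ) Real.HolderConjugate.two_two
    (f := f) (g := g) (by simpa using hf) (by simpa using hg)
  simpa only [Real.norm_eq_abs, Real.rpow_two, sq_abs, ← Real.sqrt_eq_rpow] using h

theorem abs_integral_mul_mul_le {a f g : α → ℝ} {M : ℝ} (ha : ∀ᵐ x ∂μ, |a x| ≤ M)
    (hf : MemLp f 2 μ) (hg : MemLp g 2 μ) :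
    |∫ x, a x * (f x * g x) ∂μ| ≤ M * (√(∫ x, f x ^ 2 ∂μ) * √(∫ x, g x ^ 2 ∂μ)) := by
  rcases eq_zero_or_neZero μ with rfl | hμ
  · simp
  obtain ⟨x₀, hx₀⟩ := ha.exists
  have hM : 0 ≤ M := (abs_nonneg _).trans hx₀
  have hfg : Integrable (fun x => |f x| * |g x|) μ := hf.abs.integrable_mul hg.abs
  calc |∫ x, a x * (f x * g x) ∂μ|
      ≤ ∫ x, M * (|f x| * |g x|) ∂μ := by
        rw [← Real.norm_eq_abs]
        refine norm_integral_le_of_norm_le (hfg.const_mul M) ?_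
        filter_upwards [ha] with x hx
        rw [Real.norm_eq_abs, abs_mul, abs_mul]
        gcongr
    _ = M * ∫ x, |f x| * |g x| ∂μ := integral_const_mul _ _
    _ ≤ _ := by gcongr; exact integral_abs_mul_abs_le_sqrt_mul_sqrt hf hg

end Integral

section Trigonometry

theorem abs_sin_nat_mul_le (n : ℕ) (x : ℝ) : |sin (n * x)| ≤ n * |sin x| := by
  induction n with
  | zero => simp
  | succ k ih =>
    calc |sin ((k + 1 : ℕ) * x)|
        = |sin (k * x) * cos x + cos (k * x) * sin x| := by
          rw [← sin_add]; push_cast; ring_nf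
      _ ≤ |sin (k * x)| * |cos x| + |cos (k * x)| * |sin x| := by
          simpa only [abs_mul] using abs_add_le (sin (k * x) * cos x) (cos (k * x) * sin x)
      _ ≤ |sin (k * x)| * 1 + 1 * |sin x| := by gcongr <;> exact abs_cos_le_one _
      _ ≤ (k + 1 : ℕ) * |sin x| := by push_cast; linarith

theorem abs_mul_sin_mul_cot_sub_cos_le {n : ℕ} (hn : n ≠ 0) {x : ℝ} (hx : sin x ≠ 0) :
    |n * (sin (n * x) * cot x) - cos (n * x)| ≤ (n : ℝ) ^ 2 - 1 := by
  obtain ⟨k, rfl⟩ := Nat.exists_eq_succ_of_ne_zero hn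
  have hsin : sin (k * x) = sin (k.succ * x) * cos x - cos (k.succ * x) * sin x := by
    rw [← sin_sub]; push_cast; ring_nf
  have hquot : |sin (k * x) / sin x| ≤ k := by
    rw [abs_div, div_le_iff₀ (abs_pos.2 hx)]
    exact abs_sin_nat_mul_le k x
  calc |k.succ * (sin (k.succ * x) * cot x) - cos (k.succ * x)|
      = |k.succ * (sin (k * x) / sin x) + k * cos (k.succ * x)| := by
        rw [hsin, cot_eq_cos_div_sin]; congr 1; field_simp; push_cast; ring
    _ ≤ k.succ * |sin (k * x) / sin x| + k * |cos (k.succ * x)| := by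
        simpa only [abs_mul, Nat.abs_cast] using
          abs_add_le (k.succ * (sin (k * x) / sin x)) (k * cos (k.succ * x))
    _ ≤ k.succ * k + k * 1 := by gcongr; exact abs_cos_le_one _
    _ = (k.succ : ℝ) ^ 2 - 1 := by push_cast; ring

theorem continuous_sin_nat_mul_sq_mul_cot (n : ℕ) :
    Continuous fun x : ℝ => sin (n * x) ^ 2 * cot x := by
  have hU (x : ℝ) : ((Polynomial.Chebyshev.U ℝ (n - 1)).eval (cos x)) * sin x = sin (n * x) := by
    simp [Polynomial.Chebyshev.U_real_cos]
  have h : (fun x : ℝ => sin (n * x) ^ 2 * cot x) = fun x =>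
      sin (n * x) * (Polynomial.Chebyshev.U ℝ (n - 1)).eval (cos x) * cos x := by
    funext x
    rw [← hU, cot_eq_cos_div_sin]
    field_simp
  rw [h]
  fun_prop

theorem hasDerivAt_cot {x : ℝ} (hx : sin x ≠ 0) : HasDerivAt cot (-(1 + cot x ^ 2)) x := by
  rw [show cot = fun y => cos y / sin y from funext cot_eq_cos_div_sin]
  refine ((hasDerivAt_cos x).div (hasDerivAt_sin x) hx).congr_deriv ?_
  field_simp
  ring

theorem hasDerivAt_sin_mul_sq_mul_cot (a : ℝ) {x : ℝ} (hx : sin x ≠ 0) :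
    HasDerivAt (fun y => sin (a * y) ^ 2 * cot y)
      (a ^ 2 * cos (a * x) ^ 2 - sin (a * x) ^ 2 - (a * cos (a * x) - sin (a * x) * cot x) ^ 2)
      x := by
  have hsin : HasDerivAt (fun y => sin (a * y)) (cos (a * x) * a) x :=
    (hasDerivAt_const_mul a).sin
  refine ((hsin.fun_pow 2).mul (hasDerivAt_cot hx)).congr_deriv ?_
  ring

theorem hasDerivAt_antideriv_sq_mul_cos_sq_sub_sin_sq {a : ℝ} (ha : a ≠ 0) (x : ℝ) :
    HasDerivAt (fun y => (a ^ 2 - 1) / 2 * y + (a ^ 2 + 1) / (2 * a) * (sin (a * y) * cos (a * y)))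
      (a ^ 2 * cos (a * x) ^ 2 - sin (a * x) ^ 2) x := by
  have hax : HasDerivAt (fun y => a * y) a x := hasDerivAt_const_mul a
  refine ((hasDerivAt_const_mul ((a ^ 2 - 1) / 2)).add
    ((hax.sin.mul hax.cos).const_mul ((a ^ 2 + 1) / (2 * a)))).congr_deriv ?_
  field_simp
  linear_combination (1 - a ^ 2) * sin_sq_add_cos_sq (a * x)

theorem integral_sq_mul_cos_sub_sin_mul_cot {n : ℕ} (hn : n ≠ 0) :
    ∫ x in (0 : ℝ)..π / 2, (n * cos (n * x) - sin (n * x) * cot x) ^ 2 =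
      ((n : ℝ) ^ 2 - 1) * (π / 4) := by
  have hpi : (0 : ℝ) ≤ π / 2 := by positivity
  let F : ℝ → ℝ := fun x => ((n : ℝ) ^ 2 - 1) / 2 * x +
    ((n : ℝ) ^ 2 + 1) / (2 * n) * (sin (n * x) * cos (n * x)) - sin (n * x) ^ 2 * cot x
  have hcont : ContinuousOn F (Set.Icc 0 (π / 2)) :=
    (Continuous.sub (by fun_prop) (continuous_sin_nat_mul_sq_mul_cot n)).continuousOn
  have hderiv : ∀ x ∈ Set.Ioo 0 (π / 2),
      HasDerivAt F ((n * cos (n * x) - sin (n * x) * cot x) ^ 2) x := by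
    intro x hx
    have hsin : sin x ≠ 0 := (sin_pos_of_pos_of_lt_pi hx.1 (by linarith [hx.2, pi_pos])).ne'
    refine ((hasDerivAt_antideriv_sq_mul_cos_sq_sub_sin_sq (Nat.cast_ne_zero.2 hn) x).sub
      (hasDerivAt_sin_mul_sq_mul_cot n hsin)).congr_deriv ?_
    ring
  have hint := (intervalIntegrable_iff_integrableOn_Ioc_of_le hpi).2 <|
    intervalIntegral.integrableOn_deriv_of_nonneg hcont hderiv fun _ _ => sq_nonneg _
  have hsin_cos : sin (n * (π / 2)) * cos (n * (π / 2)) = 0 := by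
    have h := sin_two_mul (n * (π / 2))
    rw [show 2 * (n * (π / 2)) = n * π by ring, sin_nat_mul_pi] at h
    linarith
  rw [intervalIntegral.integral_eq_sub_of_hasDerivAt_of_le hpi hcont hderiv hint]
  simp only [F, hsin_cos, cot_eq_cos_div_sin, cos_pi_div_two, mul_zero, sin_zero, zero_mul,
    zero_div]
  ring

theorem cos_odd_mul_pi_div_two {n : ℕ} (hn : Odd n) : cos (n * (π / 2)) = 0 := by
  obtain ⟨k, rfl⟩ := hn
  exact cos_eq_zero_iff.2 ⟨k, by push_cast; ring⟩

theorem sq_mul_sin_sub_cos_mul_tan_pi_div_two_sub {n : ℕ} (hn : Odd n) (x : ℝ) :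
    (n * sin (n * (π / 2 - x)) - cos (n * (π / 2 - x)) * tan (π / 2 - x)) ^ 2 =
      (n * cos (n * x) - sin (n * x) * cot x) ^ 2 := by
  have hcos := cos_odd_mul_pi_div_two hn
  have hsin : sin (n * (π / 2)) ^ 2 = 1 := by rw [sin_sq, hcos]; ring
  rw [tan_pi_div_two_sub, tan_inv_eq_cot, mul_sub, sin_sub, cos_sub, hcos]
  linear_combination (n * cos (n * x) - sin (n * x) * cot x) ^ 2 * hsin

theorem integral_sq_mul_sin_sub_cos_mul_tan {n : ℕ} (hn : Odd n) :
    ∫ x in (0 : ℝ)..π / 2, (n * sin (n * x) - cos (n * x) * tan x) ^ 2 =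
      ((n : ℝ) ^ 2 - 1) * (π / 4) := by
  have hreflect := intervalIntegral.integral_comp_sub_left (a := 0) (b := π / 2)
    (fun x => (n * sin (n * x) - cos (n * x) * tan x) ^ 2) (π / 2)
  rw [sub_self, sub_zero] at hreflect
  rw [← hreflect, ← integral_sq_mul_cos_sub_sin_mul_cot hn.pos.ne']
  simp only [sq_mul_sin_sub_cos_mul_tan_pi_div_two_sub hn]

theorem measurable_real_tan : Measurable tan := by
  rw [show tan = fun x => sin x / cos x from funext tan_eq_sin_div_cos]
  fun_prop

end Trigonometry

section Eigenfunctions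

theorem ω_eq_natCast (j : ℕ) : ω j = (2 * j + 3 : ℕ) := by
  simp [ω]

theorem ω_pos (j : ℕ) : 0 < ω j := by
  unfold ω; positivity

theorem ω_sq_sub_one_pos (j : ℕ) : 0 < ω j ^ 2 - 1 := by
  have : 0 ≤ (j : ℝ) := j.cast_nonneg
  unfold ω; nlinarith

/-- The factor `(2/√π)·(ω_j² − 1)^(−1/2)` of `e_j`, which normalizes `e_j` and `e_j' / ω_j` in
`L²(tan² x dx)` on `(0, π/2)`. -/
noncomputable def normalization (j : ℕ) : ℝ := 2 / √π * (√(ω j ^ 2 - 1))⁻¹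

theorem abs_e_le (j : ℕ) {x : ℝ} (hx : sin x ≠ 0) : |e j x| ≤ 2 / √π * ω j := by
  have hpos := ω_sq_sub_one_pos j
  have hprofile : |ω j * sin (ω j * x) / tan x - cos (ω j * x)| ≤ ω j ^ 2 - 1 := by
    rw [div_eq_mul_inv, tan_inv_eq_cot, mul_assoc, ω_eq_natCast]
    exact abs_mul_sin_mul_cot_sub_cos_le (by lia) hx
  have hnorm : 0 ≤ normalization j := by unfold normalization; positivity
  calc |e j x|
      = normalization j * |ω j * sin (ω j * x) / tan x - cos (ω j * x)| := by
        rw [e, ← normalization, abs_mul, abs_of_nonneg hnorm]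
    _ ≤ normalization j * (ω j ^ 2 - 1) := by gcongr
    _ = 2 / √π * √(ω j ^ 2 - 1) := by
        rw [normalization, mul_assoc, inv_mul_eq_div, div_sqrt]
    _ ≤ 2 / √π * ω j := by
        gcongr
        exact sqrt_le_iff.2 ⟨(ω_pos j).le, by linarith⟩

theorem normalization_sq_mul (j : ℕ) : normalization j ^ 2 * ((ω j ^ 2 - 1) * (π / 4)) = 1 := by
  have hpos := ω_sq_sub_one_pos j
  rw [normalization, mul_pow, div_pow, inv_pow, sq_sqrt hpos.le, sq_sqrt pi_pos.le]
  field_simp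
  norm_num

theorem e_mul_tan (j : ℕ) {x : ℝ} (hx : tan x ≠ 0) :
    e j x * tan x = normalization j * (ω j * sin (ω j * x) - cos (ω j * x) * tan x) := by
  rw [e, normalization, mul_assoc, sub_mul, div_mul_cancel₀ _ hx]

theorem e'_div_ω_mul_tan (j : ℕ) {x : ℝ} (hx : tan x ≠ 0) :
    e' j x / ω j * tan x =
      normalization j * (ω j * cos (ω j * x) - sin (ω j * x) * cot x) := by
  have hω := (ω_pos j).ne'
  rw [e', normalization, ← tan_inv_eq_cot]
  field_simp

theorem setIntegral_sq_normalization_mul (j : ℕ) {g : ℝ → ℝ}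
    (hg : ∫ x in (0 : ℝ)..π / 2, g x ^ 2 = (ω j ^ 2 - 1) * (π / 4)) :
    ∫ x in Set.Ioo 0 (π / 2), (normalization j * g x) ^ 2 = 1 := by
  rw [intervalIntegral.integral_of_le (by positivity), integral_Ioc_eq_integral_Ioo] at hg
  simp only [mul_pow]
  rw [integral_const_mul, hg, normalization_sq_mul]

theorem setIntegral_sq_e_mul_tan (j : ℕ) :
    ∫ x in Set.Ioo 0 (π / 2), (e j x * tan x) ^ 2 = 1 := by
  rw [setIntegral_congr_fun measurableSet_Ioo fun x hx => congrArg (· ^ 2) <|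
    e_mul_tan j (tan_pos_of_pos_of_lt_pi_div_two hx.1 hx.2).ne']
  apply setIntegral_sq_normalization_mul
  rw [ω_eq_natCast]
  exact integral_sq_mul_sin_sub_cos_mul_tan ⟨j + 1, by ring⟩

theorem setIntegral_sq_e'_div_ω_mul_tan (j : ℕ) :
    ∫ x in Set.Ioo 0 (π / 2), (e' j x / ω j * tan x) ^ 2 = 1 := by
  rw [setIntegral_congr_fun measurableSet_Ioo fun x hx => congrArg (· ^ 2) <|
    e'_div_ω_mul_tan j (tan_pos_of_pos_of_lt_pi_div_two hx.1 hx.2).ne']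
  apply setIntegral_sq_normalization_mul
  rw [ω_eq_natCast]
  exact integral_sq_mul_cos_sub_sin_mul_cot (by lia)

theorem measurable_e (j : ℕ) : Measurable (e j) := by
  have := measurable_real_tan
  unfold e
  fun_prop

theorem measurable_e' (j : ℕ) : Measurable (e' j) := by
  have := measurable_real_tan
  unfold e'
  fun_prop

theorem abs_setIntegral_e_mul_mul_le (i : ℕ) {f g : ℝ → ℝ} (hf : Measurable f) (hg : Measurable g)
    (hf_norm : ∫ x in Set.Ioo 0 (π / 2), f x ^ 2 = 1)
    (hg_norm : ∫ x in Set.Ioo 0 (π / 2), g x ^ 2 = 1) :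
    |∫ x in Set.Ioo 0 (π / 2), e i x * (f x * g x)| ≤ 2 / √π * ω i := by
  have he : ∀ᵐ x ∂volume.restrict (Set.Ioo 0 (π / 2)), |e i x| ≤ 2 / √π * ω i :=
    ae_restrict_of_forall_mem measurableSet_Ioo fun x hx =>
      abs_e_le i (sin_pos_of_pos_of_lt_pi hx.1 (by linarith [hx.2, pi_pos])).ne'
  have hf_memLp : MemLp f 2 (volume.restrict (Set.Ioo 0 (π / 2))) :=
    memLp_two_of_integral_sq_ne_zero hf.aestronglyMeasurable (hf_norm ▸ one_ne_zero)
  have hg_memLp : MemLp g 2 (volume.restrict (Set.Ioo 0 (π / 2))) :=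
    memLp_two_of_integral_sq_ne_zero hg.aestronglyMeasurable (hg_norm ▸ one_ne_zero)
  simpa [hf_norm, hg_norm] using abs_integral_mul_mul_le he hf_memLp hg_memLp

end Eigenfunctions

/-- Growth of the cubic interaction coefficients: for all `i, j, m ∈ ℕ`,
`|C_{ij}^{(m)}| ≤ (2/√π)·ω_i` and `|C̄_{ij}^{(m)}| ≤ (2/√π)·ω_i`,
i.e. the Fourier constants `C_{ij}^{(m)}` and `C̄_{ij}^{(m)}` are `O(ω_i)`. -/
theorem cubic_interaction_coefficients_growth (i j m : ℕ) :
    |∫ x in Set.Ioo (0 : ℝ) (Real.pi / 2),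
        e i x * e j x * e m x * Real.tan x ^ 2| ≤ (2 / Real.sqrt Real.pi) * ω i ∧
    |∫ x in Set.Ioo (0 : ℝ) (Real.pi / 2),
        e i x * (e' j x / ω j) * (e' m x / ω m) * Real.tan x ^ 2| ≤
      (2 / Real.sqrt Real.pi) * ω i := by
  have htan := measurable_real_tan
  constructor
  · have h := abs_setIntegral_e_mul_mul_le i ((measurable_e j).mul htan) ((measurable_e m).mul htan)
      (setIntegral_sq_e_mul_tan j) (setIntegral_sq_e_mul_tan m)
    convert h using 4
    simp only [Pi.mul_apply]
    ring
  · have h := abs_setIntegral_e_mul_mul_le i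
      (((measurable_e' j).div_const (ω j)).mul htan) (((measurable_e' m).div_const (ω m)).mul htan)
      (setIntegral_sq_e'_div_ω_mul_tan j) (setIntegral_sq_e'_div_ω_mul_tan m)
    convert h using 4
    simp only [Pi.mul_apply]
    ring
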